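/- Let D ⊆ ℝ² be the closed unit disk centered at the origin, and let X ⊆ ℝ² be a compact convex set with perimeter ℓ(∂X) = 2π that is not a closed disk (i.e., X is not equal to any closed ball in ℝ²). Then there exists ε > 0 such that for all l with 0 < l < ε, the Buffon probabilities satisfy P_X(l) < P_D(l). -/

import Mathlib

open MeasureTheory Metric Set Real Pointwise
open scoped ENNReal RealInnerProductSpace

noncomputable section

/-- The Euclidean plane. -/
abbrev Plane := EuclideanSpace ℝ (Fin 2)

/-- The unit vector in the plane making angle `θ` with the horizontal axis. -/
def needleDir (θ : ℝ) : Plane :=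
  (EuclideanSpace.equiv (Fin 2) ℝ).symm ![Real.cos θ, Real.sin θ]

/-- The set of directions `θ ∈ [0, 2π)` for which the needle of length `l`
originating at `x` has its other endpoint in `X`. -/
def needleAngles (X : Set Plane) (l : ℝ) (x : Plane) : Set ℝ :=
  {θ ∈ Set.Ico 0 (2 * π) | x + l • needleDir θ ∈ X}

/-- The pointwise probability `p_X(x, l)` that a random needle of length `l` at `x`
lies within `X`. -/
def pointwiseProb (X : Set Plane) (x : Plane) (l : ℝ) : ℝ :=
  (1 / (2 * π)) * (volume (needleAngles X l x)).toReal

/-- The Buffon probability `P_X(l)` that a random needle of length `l` originating at a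
uniformly chosen point of `X` lies within `X`; taken to be `0` when `X` has zero area. -/
def buffonProb (X : Set Plane) (l : ℝ) : ℝ :=
  if volume X = 0 then 0
  else (1 / (2 * π * (volume X).toReal)) *
    ∫ x in X, (volume (needleAngles X l x)).toReal

/-- The interior parallel `X_r`: the Minkowski difference of `X` with the closed ball
of radius `r`. -/
def innerParallel (X : Set Plane) (r : ℝ) : Set Plane :=
  {x : Plane | Metric.closedBall x r ⊆ X}

/-- The exterior parallel `X^r`: the Minkowski sum of `X` with the closed ball
of radius `r`. -/
def exterParallel (X : Set Plane) (r : ℝ) : Set Plane :=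
  X + Metric.closedBall (0 : Plane) r

end

/-! ### Unit vectors of the plane -/

@[simp] lemma needleDir_apply_zero (θ : ℝ) : needleDir θ 0 = Real.cos θ := rfl

@[simp] lemma needleDir_apply_one (θ : ℝ) : needleDir θ 1 = Real.sin θ := rfl

lemma inner_plane_eq (x y : Plane) : ⟪x, y⟫ = x 0 * y 0 + x 1 * y 1 := by
  simp [PiLp.inner_apply, Fin.sum_univ_two, mul_comm]

lemma inner_needleDir (a b : ℝ) : ⟪needleDir a, needleDir b⟫ = Real.cos (a - b) := by
  rw [inner_plane_eq, Real.cos_sub]; simp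

lemma inner_needleDir_right (x : Plane) (θ : ℝ) :
    ⟪x, needleDir θ⟫ = x 0 * Real.cos θ + x 1 * Real.sin θ := by
  rw [inner_plane_eq]; simp

@[simp] lemma norm_needleDir (θ : ℝ) : ‖needleDir θ‖ = 1 := by
  have h : ‖needleDir θ‖ ^ 2 = 1 := by
    rw [← real_inner_self_eq_norm_sq, inner_needleDir]; simp
  have h0 := norm_nonneg (needleDir θ)
  nlinarith

lemma continuous_needleDir : Continuous needleDir := by
  unfold needleDir
  refine (EuclideanSpace.equiv (Fin 2) ℝ).symm.continuous.comp ?_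
  refine continuous_pi fun i => ?_
  fin_cases i
  · exact Real.continuous_cos
  · exact Real.continuous_sin

lemma needleDir_add_two_pi (θ : ℝ) : needleDir (θ + 2 * π) = needleDir θ := by
  simp [needleDir]

lemma needleDir_periodic : Function.Periodic needleDir (2 * π) := needleDir_add_two_pi

lemma needleDir_add_pi (θ : ℝ) : needleDir (θ + π) = -needleDir θ := by
  ext i; fin_cases i <;> simp

lemma needleDir_add_needleDir (θ δ : ℝ) :
    needleDir (θ + δ) + needleDir (θ - δ) = (2 * Real.cos δ) • needleDir θ := by
  ext i; fin_cases i
  · simp [Real.cos_add, Real.cos_sub]; ring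
  · simp [Real.sin_add, Real.sin_sub]; ring

lemma exists_eq_norm_smul_needleDir (v : Plane) : ∃ θ : ℝ, v = ‖v‖ • needleDir θ := by
  refine ⟨Complex.arg ⟨v 0, v 1⟩, ?_⟩
  have hn : ‖v‖ = ‖(⟨v 0, v 1⟩ : ℂ)‖ := by
    rw [EuclideanSpace.norm_eq, Complex.norm_def, Complex.normSq_mk]
    simp [Fin.sum_univ_two, sq]
  rw [hn]
  ext i; fin_cases i
  · simp [Complex.norm_mul_cos_arg]
  · simp [Complex.norm_mul_sin_arg]

/-- The point with coordinates `p` in the orthonormal frame rotated by `θ`. -/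
noncomputable def rotatedFrame (θ : ℝ) (p : ℝ × ℝ) : Plane :=
  p.1 • needleDir θ + p.2 • needleDir (θ + π / 2)

lemma orthonormal_needleDir (θ : ℝ) :
    Orthonormal ℝ ![needleDir θ, needleDir (θ + π / 2)] := by
  rw [orthonormal_iff_ite]
  intro i j
  fin_cases i <;> fin_cases j <;> simp [inner_needleDir]

lemma continuous_rotatedFrame (θ : ℝ) : Continuous (rotatedFrame θ) := by
  unfold rotatedFrame; fun_prop

lemma measurePreserving_rotatedFrame (θ : ℝ) :
    MeasurePreserving (rotatedFrame θ) volume volume := by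
  have hon := orthonormal_needleDir θ
  have hsp := hon.linearIndependent.span_eq_top_of_card_eq_finrank (by simp)
  let b : OrthonormalBasis (Fin 2) ℝ Plane := OrthonormalBasis.mk hon hsp.ge
  have key : rotatedFrame θ =
      b.repr.symm ∘ (WithLp.toLp 2) ∘ (MeasurableEquiv.finTwoArrow (α := ℝ)).symm := by
    funext p
    simp only [Function.comp_apply]
    rw [← OrthonormalBasis.sum_repr_symm]
    simp [rotatedFrame, b, Fin.sum_univ_two]
  rw [key]
  exact b.measurePreserving_repr_symm.comp
    ((PiLp.volume_preserving_toLp (Fin 2)).comp (volume_preserving_finTwoArrow ℝ).symm)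

lemma inner_rotatedFrame (θ φ : ℝ) (p : ℝ × ℝ) :
    ⟪rotatedFrame θ p, needleDir φ⟫ = p.1 * Real.cos (θ - φ) - p.2 * Real.sin (θ - φ) := by
  rw [rotatedFrame, inner_add_left, real_inner_smul_left, real_inner_smul_left, inner_needleDir,
    inner_needleDir, show θ + π / 2 - φ = θ - φ + π / 2 by ring, Real.cos_add_pi_div_two]
  ring

lemma rotatedFrame_inner (θ : ℝ) (x : Plane) :
    rotatedFrame θ (⟪x, needleDir θ⟫, ⟪x, needleDir (θ + π / 2)⟫) = x := by
  have h := Real.sin_sq_add_cos_sq θ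
  ext i; fin_cases i
  · simp [rotatedFrame, inner_needleDir_right, Real.cos_add_pi_div_two, Real.sin_add_pi_div_two]
    linear_combination (x 0) * h
  · simp [rotatedFrame, inner_needleDir_right, Real.cos_add_pi_div_two, Real.sin_add_pi_div_two]
    linear_combination (x 1) * h

/-! ### Support functions -/

/-- The support function of `X` in the direction of angle `θ`. -/
noncomputable def supportFun (X : Set Plane) (θ : ℝ) : ℝ :=
  sSup ((fun x => ⟪x, needleDir θ⟫) '' X)

section Support

variable {X : Set Plane}

lemma inner_le_supportFun (hX : IsCompact X) {x : Plane} (hx : x ∈ X) (θ : ℝ) :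
    ⟪x, needleDir θ⟫ ≤ supportFun X θ := by
  refine le_csSup ?_ ⟨x, hx, rfl⟩
  exact (hX.image (by fun_prop)).bddAbove

lemma exists_inner_eq_supportFun (hX : IsCompact X) (hne : X.Nonempty) (θ : ℝ) :
    ∃ x ∈ X, ⟪x, needleDir θ⟫ = supportFun X θ :=
  (hX.image (f := fun x => ⟪x, needleDir θ⟫) (by fun_prop)).sSup_mem (hne.image _)

lemma supportFun_periodic (X : Set Plane) : Function.Periodic (supportFun X) (2 * π) := by
  intro θ; simp only [supportFun, needleDir_add_two_pi]

lemma continuous_supportFun (hX : IsCompact X) (hne : X.Nonempty) :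
    Continuous (supportFun X) := by
  obtain ⟨R, hR⟩ := hX.isBounded.exists_norm_le
  have hlip : ∀ a b, supportFun X a - supportFun X b ≤ R * ‖needleDir a - needleDir b‖ := by
    intro a b
    obtain ⟨x, hx, hxa⟩ := exists_inner_eq_supportFun hX hne a
    have h1 := inner_le_supportFun hX hx b
    have h2 : ⟪x, needleDir a - needleDir b⟫ ≤ ‖x‖ * ‖needleDir a - needleDir b‖ :=
      real_inner_le_norm _ _
    rw [inner_sub_right] at h2
    have h3 := mul_le_mul_of_nonneg_right (hR x hx) (norm_nonneg (needleDir a - needleDir b))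
    linarith
  rw [continuous_iff_continuousAt]
  intro a
  rw [ContinuousAt, tendsto_iff_dist_tendsto_zero]
  have hlim : Filter.Tendsto (fun b => R * ‖needleDir b - needleDir a‖) (nhds a) (nhds 0) := by
    have : Continuous fun b => R * ‖needleDir b - needleDir a‖ := by
      have := continuous_needleDir; fun_prop
    simpa using this.tendsto a
  refine squeeze_zero (fun _ => dist_nonneg) (fun b => ?_) hlim
  rw [Real.dist_eq, abs_le]
  have h1 := hlip a b
  have h2 := hlip b a
  rw [norm_sub_rev] at h1
  constructor <;> linarith

lemma le_supportFun_of_closedBall_subset (hX : IsCompact X) {r : ℝ} (hr : 0 ≤ r)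
    (hball : closedBall 0 r ⊆ X) (θ : ℝ) : r ≤ supportFun X θ := by
  have hx : r • needleDir θ ∈ X := hball (by simp [norm_smul, abs_of_nonneg hr])
  have := inner_le_supportFun hX hx θ
  rwa [real_inner_smul_left, inner_needleDir, sub_self, Real.cos_zero, mul_one] at this

lemma two_mul_cos_mul_supportFun_le (hX : IsCompact X) (hne : X.Nonempty) (θ δ : ℝ) :
    2 * Real.cos δ * supportFun X θ ≤ supportFun X (θ + δ) + supportFun X (θ - δ) := by
  obtain ⟨x, hx, hxθ⟩ := exists_inner_eq_supportFun hX hne θ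
  have h1 := inner_le_supportFun hX hx (θ + δ)
  have h2 := inner_le_supportFun hX hx (θ - δ)
  rw [← hxθ, ← real_inner_smul_right, ← needleDir_add_needleDir, inner_add_right]
  linarith

lemma mem_of_forall_inner_le_supportFun (hX : IsCompact X) (hconv : Convex ℝ X)
    (hne : X.Nonempty) {y : Plane} (hy : ∀ θ, ⟪y, needleDir θ⟫ ≤ supportFun X θ) : y ∈ X := by
  by_contra hyX
  obtain ⟨f, c, hf, hc⟩ := geometric_hahn_banach_closed_point hconv hX.isClosed hyX
  set v := (InnerProductSpace.toDual ℝ Plane).symm f with hv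
  have hfv : ∀ x, f x = ⟪x, v⟫ := fun x => by
    rw [real_inner_comm, hv, InnerProductSpace.toDual_symm_apply]
  obtain ⟨θ, hθ⟩ := exists_eq_norm_smul_needleDir v
  obtain ⟨x, hx, hxθ⟩ := exists_inner_eq_supportFun hX hne θ
  have h1 := hf x hx
  rw [hfv, hθ, real_inner_smul_right, hxθ] at h1
  rw [hfv, hθ, real_inner_smul_right] at hc
  have := mul_le_mul_of_nonneg_left (hy θ) (norm_nonneg v)
  linarith

/-- A compact convex set whose support function is that of a disk is a disk. -/
lemma eq_closedBall_of_supportFun_eq (hX : IsCompact X) (hconv : Convex ℝ X)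
    (hne : X.Nonempty) {a : ℝ} {b : Plane} (h : ∀ θ, supportFun X θ = a + ⟪b, needleDir θ⟫) :
    X = closedBall b a := by
  ext y
  rw [mem_closedBall_iff_norm]
  constructor
  · intro hy
    obtain ⟨θ, hθ⟩ := exists_eq_norm_smul_needleDir (y - b)
    have h1 := inner_le_supportFun hX hy θ
    have h2 : ⟪y - b, needleDir θ⟫ = ‖y - b‖ := by
      nth_rw 1 [hθ]; rw [real_inner_smul_left, inner_needleDir]; simp
    rw [inner_sub_left] at h2
    linarith [h θ]
  · intro hy
    refine mem_of_forall_inner_le_supportFun hX hconv hne fun θ => ?_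
    have h1 : ⟪y - b, needleDir θ⟫ ≤ ‖y - b‖ * ‖needleDir θ‖ := real_inner_le_norm _ _
    rw [inner_sub_left, norm_needleDir, mul_one] at h1
    linarith [h θ]

end Support

/-! ### Area of circumscribed polygons -/

lemma volume_triangle (θ : ℝ) {h α β : ℝ} (hh : 0 ≤ h) (hαβ : α ≤ β) :
    volume {x : Plane | ⟪x, needleDir θ⟫ ∈ Icc 0 h ∧
      ⟪x, needleDir (θ + π / 2)⟫ ∈ Icc (α * ⟪x, needleDir θ⟫) (β * ⟪x, needleDir θ⟫)} =
      ENNReal.ofReal ((β - α) * h ^ 2 / 2) := by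
  have hclosed : IsClosed {x : Plane | ⟪x, needleDir θ⟫ ∈ Icc 0 h ∧
      ⟪x, needleDir (θ + π / 2)⟫ ∈ Icc (α * ⟪x, needleDir θ⟫) (β * ⟪x, needleDir θ⟫)} := by
    simp only [mem_Icc]
    refine IsClosed.and (IsClosed.and ?_ ?_) (IsClosed.and ?_ ?_) <;>
    exact isClosed_le (by fun_prop) (by fun_prop)
  rw [← (measurePreserving_rotatedFrame θ).measure_preimage hclosed.measurableSet.nullMeasurableSet,
    Measure.volume_eq_prod, Measure.prod_apply
      ((continuous_rotatedFrame θ).measurable hclosed.measurableSet)]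
  have hfib : ∀ s : ℝ, volume (Prod.mk s ⁻¹' (rotatedFrame θ ⁻¹' {x : Plane |
      ⟪x, needleDir θ⟫ ∈ Icc 0 h ∧
      ⟪x, needleDir (θ + π / 2)⟫ ∈ Icc (α * ⟪x, needleDir θ⟫) (β * ⟪x, needleDir θ⟫)})) =
      (Icc 0 h).indicator (fun s => ENNReal.ofReal ((β - α) * s)) s := by
    intro s
    have hset : (Prod.mk s ⁻¹' (rotatedFrame θ ⁻¹' {x : Plane | ⟪x, needleDir θ⟫ ∈ Icc 0 h ∧
      ⟪x, needleDir (θ + π / 2)⟫ ∈ Icc (α * ⟪x, needleDir θ⟫) (β * ⟪x, needleDir θ⟫)})) =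
      {t | s ∈ Icc 0 h ∧ t ∈ Icc (α * s) (β * s)} := by
      ext t
      simp [inner_rotatedFrame]
    rw [hset]
    by_cases hs : s ∈ Icc 0 h
    · rw [indicator_of_mem hs]
      simp only [hs, true_and, ofPred_mem_eq, Real.volume_Icc]
      congr 1; ring
    · simp [hs]
  simp_rw [hfib]
  rw [lintegral_indicator measurableSet_Icc, ← ofReal_integral_eq_lintegral_ofReal]
  · congr 1
    rw [integral_Icc_eq_integral_Ioc, ← intervalIntegral.integral_of_le hh,
      intervalIntegral.integral_const_mul, integral_id]
    ring
  · exact (Continuous.integrableOn_Icc (by fun_prop))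
  · refine (ae_restrict_iff' measurableSet_Icc).2 (Filter.Eventually.of_forall fun s hs => ?_)
    exact mul_nonneg (sub_nonneg.2 hαβ) hs.1

lemma sum_cos_add_mul (n : ℕ) (hn : 2 ≤ n) (a : ℝ) :
    ∑ i ∈ Finset.range n, Real.cos (a + i * (2 * π / n)) = 0 := by
  have hn0 : (0 : ℝ) < n := by positivity
  have hs : 0 < Real.sin (π / n) := by
    refine Real.sin_pos_of_pos_of_lt_pi (by positivity) ?_
    rw [div_lt_iff₀ hn0]
    have : (2 : ℝ) ≤ n := by exact_mod_cast hn
    nlinarith [Real.pi_pos]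
  have hterm : ∀ i : ℕ, 2 * Real.sin (π / n) * Real.cos (a + i * (2 * π / n)) =
      Real.sin (a + ((i + 1 : ℕ) : ℝ) * (2 * π / n) - π / n) -
        Real.sin (a + (i : ℝ) * (2 * π / n) - π / n) := by
    intro i
    rw [Real.sin_sub_sin]
    push_cast
    congr 2
    · congr 1; ring
    · ring
  have hsum : 2 * Real.sin (π / n) * ∑ i ∈ Finset.range n, Real.cos (a + i * (2 * π / n)) = 0 := by
    rw [Finset.mul_sum, Finset.sum_congr rfl fun i _ => hterm i,
      Finset.sum_range_sub (fun i : ℕ => Real.sin (a + (i : ℝ) * (2 * π / n) - π / n))]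
    have h1 : a + (n : ℝ) * (2 * π / n) - π / n = a - π / n + 2 * π := by field_simp; ring
    rw [h1, Real.sin_add_two_pi]
    simp
  rcases mul_eq_zero.1 hsum with h | h
  · linarith
  · exact h

lemma exists_forall_le_of_periodic {n : ℕ} (hn : 0 < n) (g : ℤ → ℝ)
    (hg : Function.Periodic g (n : ℤ)) : ∃ i ∈ Finset.range n, ∀ j : ℤ, g j ≤ g i := by
  obtain ⟨i, hi, hmax⟩ := Finset.exists_max_image (Finset.range n) (fun i : ℕ => g i)
    ⟨0, Finset.mem_range.2 hn⟩
  refine ⟨i, hi, fun j => ?_⟩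
  have hn' : (0 : ℤ) < n := by exact_mod_cast hn
  have h0 := Int.emod_nonneg j hn'.ne'
  have h1 := Int.emod_lt_of_pos j hn'
  have h2 := hmax (j % n).toNat (Finset.mem_range.2 (by omega))
  have h3 : g (((j % n).toNat : ℕ) : ℤ) = g j := by
    rw [Int.toNat_of_nonneg h0, Int.emod_def, mul_comm]
    exact hg.sub_zsmul_eq (j / n)
  rw [h3] at h2
  exact h2

section Area

variable {X : Set Plane} {r : ℝ}

lemma volume_le_sum_supportFun (hX : IsCompact X) (hr : 0 < r) (hball : closedBall 0 r ⊆ X)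
    {n : ℕ} (hn : 3 ≤ n) (θ : ℝ) :
    (volume X).toReal ≤ ∑ i ∈ Finset.range n,
      supportFun X (θ + i * (2 * π / n)) * (supportFun X (θ + i * (2 * π / n) + 2 * π / n) +
        supportFun X (θ + i * (2 * π / n) - 2 * π / n) -
        2 * Real.cos (2 * π / n) * supportFun X (θ + i * (2 * π / n))) /
          (2 * Real.sin (2 * π / n)) := by
  have hne : X.Nonempty := ⟨0, hball (by simp [hr.le])⟩
  have hpos : ∀ φ, 0 < supportFun X φ := fun φ =>
    hr.trans_le (le_supportFun_of_closedBall_subset hX hr.le hball φ)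
  have hn0 : (0 : ℝ) < n := by positivity
  set δ : ℝ := 2 * π / n with hδ
  have hsin : 0 < Real.sin δ := by
    refine Real.sin_pos_of_pos_of_lt_pi (by positivity) ?_
    rw [hδ, div_lt_iff₀ hn0]
    have : (3 : ℝ) ≤ n := by exact_mod_cast hn
    nlinarith [Real.pi_pos]
  set H := supportFun X with hH
  let β : ℝ → ℝ := fun φ => (H (φ + δ) / H φ - Real.cos δ) / Real.sin δ
  let α : ℝ → ℝ := fun φ => -((H (φ - δ) / H φ - Real.cos δ) / Real.sin δ)
  let T : ℝ → Set Plane := fun φ => {x : Plane | ⟪x, needleDir φ⟫ ∈ Icc 0 (H φ) ∧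
      ⟪x, needleDir (φ + π / 2)⟫ ∈ Icc (α φ * ⟪x, needleDir φ⟫) (β φ * ⟪x, needleDir φ⟫)}
  have hdiff : ∀ φ, β φ - α φ =
      (H (φ + δ) + H (φ - δ) - 2 * Real.cos δ * H φ) / (H φ * Real.sin δ) := by
    intro φ
    have := (hpos φ).ne'
    simp only [β, α]
    field_simp
    ring
  have hαβ : ∀ φ, α φ ≤ β φ := by
    intro φ
    rw [← sub_nonneg, hdiff]
    have := two_mul_cos_mul_supportFun_le hX hne φ δ
    exact div_nonneg (by linarith) (mul_pos (hpos φ) hsin).le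
  have hvol : ∀ φ, volume (T φ) = ENNReal.ofReal (H φ * (H (φ + δ) + H (φ - δ) -
      2 * Real.cos δ * H φ) / (2 * Real.sin δ)) := by
    intro φ
    rw [volume_triangle φ (hpos φ).le (hαβ φ), hdiff]
    congr 1
    have := (hpos φ).ne'
    field_simp
  have hterm : ∀ φ, 0 ≤ H φ * (H (φ + δ) + H (φ - δ) - 2 * Real.cos δ * H φ) /
      (2 * Real.sin δ) := by
    intro φ
    have := two_mul_cos_mul_supportFun_le hX hne φ δ
    exact div_nonneg (mul_nonneg (hpos φ).le (by linarith)) (by linarith)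
  have hcover : X ⊆ ⋃ i ∈ Finset.range n, T (θ + i * δ) := by
    intro x hx
    let g : ℤ → ℝ := fun i => ⟪x, needleDir (θ + i * δ)⟫ / H (θ + i * δ)
    have hg : Function.Periodic g (n : ℤ) := by
      intro i
      have h1 : θ + ((i + (n : ℤ) : ℤ) : ℝ) * δ = θ + i * δ + 2 * π := by
        push_cast; rw [hδ]; field_simp; ring
      simp only [g]
      rw [h1, needleDir_periodic, hH, supportFun_periodic X]
    obtain ⟨i, hi, hmax⟩ := exists_forall_le_of_periodic (by omega) g hg
    refine mem_iUnion₂.2 ⟨i, hi, ?_⟩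
    set φ : ℝ := θ + i * δ with hφ
    have hgi : g i = ⟪x, needleDir φ⟫ / H φ := by simp [g, hφ]
    have hnn : 0 ≤ ⟪x, needleDir φ⟫ := by
      by_contra hneg
      have hgneg : g i < 0 := by rw [hgi]; exact div_neg_of_neg_of_pos (not_le.1 hneg) (hpos φ)
      obtain ⟨ψ, hψ⟩ := exists_eq_norm_smul_needleDir x
      have hsum : ∑ j ∈ Finset.range n, ⟪x, needleDir (θ + j * δ)⟫ = 0 := by
        have : ∀ j ∈ Finset.range n, ⟪x, needleDir (θ + j * δ)⟫ =
            ‖x‖ * Real.cos (θ - ψ + j * δ) := by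
          intro j _
          nth_rw 1 [hψ]
          rw [real_inner_smul_left, inner_needleDir, ← Real.cos_neg]
          congr 2; ring
        rw [Finset.sum_congr rfl this, ← Finset.mul_sum, sum_cos_add_mul n (by omega), mul_zero]
      have hlt : ∑ j ∈ Finset.range n, ⟪x, needleDir (θ + j * δ)⟫ < 0 := by
        refine Finset.sum_neg (fun j _ => ?_) ⟨0, Finset.mem_range.2 (by omega)⟩
        have h1 : g j < 0 := (hmax j).trans_lt hgneg
        by_contra hcon
        have : 0 ≤ g j := by
          simp only [g, Int.cast_natCast]
          exact div_nonneg (not_lt.1 hcon) (hpos _).le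
        linarith
      linarith
    have hstep : ∀ ψ, (⟪x, needleDir ψ⟫ / H ψ ≤ ⟪x, needleDir φ⟫ / H φ) →
        ⟪x, needleDir ψ⟫ ≤ H ψ / H φ * ⟪x, needleDir φ⟫ := by
      intro ψ h
      rw [div_le_iff₀ (hpos ψ)] at h
      calc _ ≤ _ := h
        _ = _ := by ring
    have hp := hstep (φ + δ) (by
      have := hmax (i + 1)
      rw [hgi] at this
      have e : φ + δ = θ + ((i + 1 : ℤ) : ℝ) * δ := by push_cast; rw [hφ]; ring
      rw [e]
      exact this)
    have hm := hstep (φ - δ) (by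
      have := hmax (i - 1)
      rw [hgi] at this
      have e : φ - δ = θ + ((i - 1 : ℤ) : ℝ) * δ := by push_cast; rw [hφ]; ring
      rw [e]
      exact this)
    have hexp : ∀ ε, ⟪x, needleDir (φ + ε)⟫ = ⟪x, needleDir φ⟫ * Real.cos ε +
        ⟪x, needleDir (φ + π / 2)⟫ * Real.sin ε := by
      intro ε
      simp only [inner_needleDir_right, Real.cos_add, Real.sin_add, Real.cos_pi_div_two,
        Real.sin_pi_div_two]
      ring
    rw [hexp] at hp
    rw [sub_eq_add_neg, hexp, Real.cos_neg, Real.sin_neg, ← sub_eq_add_neg φ δ] at hm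
    refine ⟨⟨hnn, inner_le_supportFun hX hx φ⟩, ?_, ?_⟩
    · simp only [α]
      rw [neg_mul, div_mul_eq_mul_div, ← neg_div, div_le_iff₀ hsin]
      linarith
    · simp only [β]
      rw [div_mul_eq_mul_div, le_div_iff₀ hsin]
      linarith
  have hle : volume X ≤ ∑ i ∈ Finset.range n, ENNReal.ofReal (H (θ + i * δ) *
      (H (θ + i * δ + δ) + H (θ + i * δ - δ) - 2 * Real.cos δ * H (θ + i * δ)) /
      (2 * Real.sin δ)) := by
    refine (measure_mono hcover).trans ((measure_biUnion_finset_le _ _).trans ?_)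
    exact Finset.sum_le_sum fun i _ => (hvol _).le
  rw [← ENNReal.ofReal_sum_of_nonneg fun i _ => hterm _] at hle
  exact ENNReal.toReal_le_of_le_ofReal (Finset.sum_nonneg fun i _ => hterm _) hle

lemma integral_sum_range_shift {F : ℝ → ℝ} (hF : Continuous F)
    (hper : Function.Periodic F (2 * π)) (n : ℕ) (δ : ℝ) :
    ∫ θ in (0)..(2 * π), ∑ i ∈ Finset.range n, F (θ + i * δ) =
      n * ∫ θ in (0)..(2 * π), F θ := by
  rw [intervalIntegral.integral_finsetSum fun i _ => Continuous.intervalIntegrable (by fun_prop) _ _]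
  have h : ∀ i ∈ Finset.range n, ∫ θ in (0)..(2 * π), F (θ + i * δ) = ∫ θ in (0)..(2 * π), F θ := by
    intro i _
    rw [intervalIntegral.integral_comp_add_right, add_comm (2 * π) _, zero_add,
      hper.intervalIntegral_add_eq _ 0, zero_add]
  rw [Finset.sum_congr rfl h]
  simp

lemma volume_mul_le_integral (hX : IsCompact X) (hr : 0 < r) (hball : closedBall 0 r ⊆ X)
    {n : ℕ} (hn : 3 ≤ n) :
    (volume X).toReal * (2 * π / n * Real.sin (2 * π / n)) ≤
      (1 - Real.cos (2 * π / n)) * (∫ θ in (0)..(2 * π), supportFun X θ ^ 2) -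
      (∫ θ in (0)..(2 * π), (supportFun X (θ + 2 * π / n) - supportFun X θ) ^ 2) / 2 := by
  have hne : X.Nonempty := ⟨0, hball (by simp [hr.le])⟩
  have hn0 : (0 : ℝ) < n := by positivity
  have hle := fun θ => volume_le_sum_supportFun hX hr hball hn θ
  set δ : ℝ := 2 * π / n with hδ
  have hsin : 0 < Real.sin δ := by
    refine Real.sin_pos_of_pos_of_lt_pi (by positivity) ?_
    rw [hδ, div_lt_iff₀ hn0]
    have : (3 : ℝ) ≤ n := by exact_mod_cast hn
    nlinarith [Real.pi_pos]
  have hcont := continuous_supportFun hX hne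
  have hper := supportFun_periodic X
  set H := supportFun X with hH
  let F : ℝ → ℝ := fun φ => H φ * (H (φ + δ) + H (φ - δ) - 2 * Real.cos δ * H φ) / (2 * Real.sin δ)
  have hF : Continuous F := by simp only [F]; fun_prop
  have hFper : Function.Periodic F (2 * π) := by
    intro φ
    simp only [F]
    rw [show φ + 2 * π + δ = φ + δ + 2 * π by ring, show φ + 2 * π - δ = φ - δ + 2 * π by ring,
      hper, hper, hper]
  have h1 : ∫ θ in (0)..(2 * π), (volume X).toReal ≤
      ∫ θ in (0)..(2 * π), ∑ i ∈ Finset.range n, F (θ + i * δ) := by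
    refine intervalIntegral.integral_mono_on (by positivity) (by simp)
      (Continuous.intervalIntegrable (by fun_prop) _ _) fun θ _ => hle θ
  rw [integral_sum_range_shift hF hFper, intervalIntegral.integral_const, sub_zero,
    smul_eq_mul] at h1
  have hshift : ∫ θ in (0)..(2 * π), H θ * H (θ - δ) = ∫ θ in (0)..(2 * π), H (θ + δ) * H θ := by
    have hp : Function.Periodic (fun θ => H (θ + δ) * H θ) (2 * π) := by
      intro φ
      simp only
      rw [show φ + 2 * π + δ = φ + δ + 2 * π by ring, hper, hper]
    have := intervalIntegral.integral_comp_sub_right (a := 0) (b := 2 * π)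
      (fun θ => H (θ + δ) * H θ) δ
    simp only [sub_add_cancel] at this
    rw [this, show 2 * π - δ = (0 - δ) + 2 * π by ring, hp.intervalIntegral_add_eq _ 0, zero_add]
  have hsq : ∫ θ in (0)..(2 * π), H (θ + δ) ^ 2 = ∫ θ in (0)..(2 * π), H θ ^ 2 := by
    have hp : Function.Periodic (fun θ => H θ ^ 2) (2 * π) := by
      intro φ; simp only; rw [hper]
    rw [intervalIntegral.integral_comp_add_right (fun θ => H θ ^ 2), add_comm (2 * π) _, zero_add,
      hp.intervalIntegral_add_eq _ 0, zero_add]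
  have hI : ∀ f : ℝ → ℝ, Continuous f → IntervalIntegrable f volume 0 (2 * π) :=
    fun f hf => hf.intervalIntegrable _ _
  have h2 : ∫ θ in (0)..(2 * π), F θ = ((∫ θ in (0)..(2 * π), H (θ + δ) * H θ) -
      Real.cos δ * ∫ θ in (0)..(2 * π), H θ ^ 2) / Real.sin δ := by
    have : ∀ θ, F θ = (H (θ + δ) * H θ + H θ * H (θ - δ) - (2 * Real.cos δ) * H θ ^ 2) /
        (2 * Real.sin δ) := by
      intro θ; simp only [F]; ring
    simp_rw [this]
    rw [intervalIntegral.integral_div, intervalIntegral.integral_sub, intervalIntegral.integral_add,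
      intervalIntegral.integral_const_mul, hshift]
    · field_simp; ring
    all_goals exact hI _ (by fun_prop)
  have h3 : ∫ θ in (0)..(2 * π), (H (θ + δ) - H θ) ^ 2 =
      2 * (∫ θ in (0)..(2 * π), H θ ^ 2) - 2 * ∫ θ in (0)..(2 * π), H (θ + δ) * H θ := by
    have : ∀ θ, (H (θ + δ) - H θ) ^ 2 = H (θ + δ) ^ 2 + H θ ^ 2 - 2 * (H (θ + δ) * H θ) := by
      intro θ; ring
    simp_rw [this]
    rw [intervalIntegral.integral_sub, intervalIntegral.integral_add,
      intervalIntegral.integral_const_mul, hsq]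
    · ring
    all_goals exact hI _ (by fun_prop)
  rw [h3]
  rw [h2, ← mul_div_assoc, le_div_iff₀ hsin] at h1
  have hδn : δ * n = 2 * π := by rw [hδ]; field_simp
  have h5 : n * ((volume X).toReal * (δ * Real.sin δ)) ≤
      n * ((∫ θ in (0)..(2 * π), H (θ + δ) * H θ) -
      Real.cos δ * ∫ θ in (0)..(2 * π), H θ ^ 2) := by
    calc _ = (δ * n) * (volume X).toReal * Real.sin δ := by ring
      _ ≤ _ := by rw [hδn]; exact h1
  have h6 := le_of_mul_le_mul_left h5 hn0
  linarith

end Area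

/-! ### Fourier coefficients of periodic functions -/

instance fact_two_pi_pos : Fact (0 < 2 * π) := ⟨Real.two_pi_pos⟩

lemma hasSum_sq_fourierCoeff_continuousMap {T : ℝ} [Fact (0 < T)] (g : C(AddCircle T, ℂ)) :
    HasSum (fun k => ‖fourierCoeff g k‖ ^ 2)
      (∫ t, ‖g t‖ ^ 2 ∂(AddCircle.haarAddCircle : Measure (AddCircle T))) := by
  have h := hasSum_sq_fourierCoeff (ContinuousMap.toLp 2 AddCircle.haarAddCircle ℂ g)
  simp_rw [fourierCoeff_toLp] at h
  convert h using 1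
  refine integral_congr_ae ?_
  filter_upwards [ContinuousMap.coeFn_toLp (p := 2) (𝕜 := ℂ) AddCircle.haarAddCircle g] with t ht
  rw [ht]

lemma fourierCoeff_comp_add_right {T : ℝ} [Fact (0 < T)] (g : AddCircle T → ℂ) (δ : AddCircle T)
    (k : ℤ) : fourierCoeff (fun t => g (t + δ)) k = fourier k δ * fourierCoeff g k := by
  unfold fourierCoeff
  rw [← integral_add_right_eq_self (μ := AddCircle.haarAddCircle)
    (fun t => fourier (-k) t • g t) δ, ← integral_const_mul]
  refine integral_congr_ae (Filter.Eventually.of_forall fun t => ?_)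
  have h1 : fourier (-k) (t + δ) = fourier (-k) t * fourier (-k) δ := by
    simp [fourier_apply, smul_add, AddCircle.toCircle_add]
  have h2 : fourier k δ * fourier (-k) δ = 1 := by
    rw [← fourier_add]; simp
  simp only [smul_eq_mul]
  rw [h1]
  linear_combination (-(fourier (-k) t * g (t + δ))) * h2

lemma norm_sq_fourier_sub_one (k : ℤ) (δ : ℝ) :
    ‖fourier k (δ : AddCircle (2 * π)) - 1‖ ^ 2 = 2 * (1 - Real.cos (k * δ)) := by
  have h : fourier k (δ : AddCircle (2 * π)) = Complex.exp ((k * δ : ℝ) * Complex.I) := by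
    rw [fourier_coe_apply]
    congr 1
    have : (π : ℂ) ≠ 0 := by exact_mod_cast Real.pi_ne_zero
    push_cast
    field_simp
  have hsq : ∀ a b : ℝ, ‖(a : ℂ) + b * Complex.I - 1‖ ^ 2 = (a - 1) ^ 2 + b ^ 2 := by
    intro a b
    rw [Complex.sq_norm, Complex.normSq_apply]
    simp
    ring
  rw [h, Complex.exp_mul_I, ← Complex.ofReal_cos, ← Complex.ofReal_sin, hsq]
  nlinarith [Real.sin_sq_add_cos_sq (k * δ)]

/-- Parseval's identity for a real periodic function and its increments, together with the
reconstruction of a function whose spectrum is contained in `{-1, 0, 1}`. -/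
lemma exists_fourier_coefficients {H : ℝ → ℝ} (hH : Continuous H)
    (hper : Function.Periodic H (2 * π)) : ∃ c : ℤ → ℂ,
    HasSum (fun k => ‖c k‖ ^ 2) ((2 * π)⁻¹ * ∫ θ in (0)..(2 * π), H θ ^ 2) ∧
    (∀ δ : ℝ, HasSum (fun k : ℤ => 2 * (1 - Real.cos (k * δ)) * ‖c k‖ ^ 2)
      ((2 * π)⁻¹ * ∫ θ in (0)..(2 * π), (H (θ + δ) - H θ) ^ 2)) ∧
    c 0 = ((2 * π)⁻¹ * ∫ θ in (0)..(2 * π), H θ : ℝ) ∧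
    ((∀ k, k ≠ 0 → k ≠ 1 → k ≠ -1 → c k = 0) → ∀ θ : ℝ,
      (H θ : ℂ) = c 0 + c 1 * Complex.exp (θ * Complex.I) +
        c (-1) * Complex.exp (-θ * Complex.I)) := by
  have hperC : Function.Periodic (fun θ => (H θ : ℂ)) (2 * π) := fun θ => by simp only [hper θ]
  have hcontC : Continuous (fun θ => (H θ : ℂ)) := Complex.continuous_ofReal.comp hH
  let f : C(AddCircle (2 * π), ℂ) := ⟨hperC.lift, continuous_coinduced_dom.mpr hcontC⟩
  have hf : ∀ θ : ℝ, f θ = (H θ : ℂ) := fun θ => rfl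
  have hint : ∀ g : AddCircle (2 * π) → ℝ, ∫ t, g t ∂AddCircle.haarAddCircle =
      (2 * π)⁻¹ * ∫ θ in (0)..(2 * π), g θ := by
    intro g
    rw [AddCircle.integral_haarAddCircle, smul_eq_mul,
      ← AddCircle.intervalIntegral_preimage (2 * π) 0, zero_add]
  refine ⟨fourierCoeff f, ?_, fun δ => ?_, ?_, fun h θ => ?_⟩
  · have h := hasSum_sq_fourierCoeff_continuousMap f
    rw [hint] at h
    simpa only [hf, Complex.norm_real, Real.norm_eq_abs, sq_abs] using h
  · let g : C(AddCircle (2 * π), ℂ) := ⟨fun t => f (t + δ) - f t, by fun_prop⟩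
    have hg : ∀ θ : ℝ, g θ = ((H (θ + δ) - H θ : ℝ) : ℂ) := by
      intro θ
      simp only [g, ContinuousMap.coe_mk]
      rw [← AddCircle.coe_add, hf, hf, Complex.ofReal_sub]
    have h := hasSum_sq_fourierCoeff_continuousMap g
    rw [hint] at h
    simp only [hg, Complex.norm_real, Real.norm_eq_abs, sq_abs] at h
    convert h using 1
    funext k
    have hgk : fourierCoeff g k = (fourier k (δ : AddCircle (2 * π)) - 1) * fourierCoeff f k := by
      have hi : ∀ q : C(AddCircle (2 * π), ℂ), Integrable q AddCircle.haarAddCircle := fun q =>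
        q.continuous.integrable_of_hasCompactSupport (HasCompactSupport.of_compactSpace _)
      have h1 : (g : AddCircle (2 * π) → ℂ) = (fun t => f (t + δ)) + (-1 : ℂ) • f := by
        funext t; simp [g, sub_eq_add_neg]
      have h2 : Integrable (fun t => f (t + δ)) AddCircle.haarAddCircle :=
        hi ⟨fun t => f (t + δ), by fun_prop⟩
      rw [h1, fourierCoeff.add h2 ((hi f).smul (-1 : ℂ))]
      simp only [Pi.add_apply]
      rw [fourierCoeff_comp_add_right, fourierCoeff.const_smul]
      simp only [smul_eq_mul]
      ring
    rw [hgk, norm_mul, mul_pow, norm_sq_fourier_sub_one]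
  · rw [fourierCoeff_eq_intervalIntegral _ _ 0, zero_add]
    simp only [hf, neg_zero, fourier_zero, one_smul]
    rw [intervalIntegral.integral_ofReal]
    simp
  · have hsup : ∀ k ∉ ({0, 1, -1} : Finset ℤ), fourierCoeff f k = 0 := by
      intro k hk
      simp only [Finset.mem_insert, Finset.mem_singleton, not_or] at hk
      exact h k hk.1 hk.2.1 hk.2.2
    have hs : Summable (fourierCoeff f) := summable_of_ne_finset_zero hsup
    have h1 := has_pointwise_sum_fourier_series_of_summable hs (θ : AddCircle (2 * π))
    have h2 := hasSum_sum_of_ne_finset_zero (L := SummationFilter.unconditional ℤ) (f := fun i => fourierCoeff f i •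
      (fourier i) (θ : AddCircle (2 * π))) (s := {0, 1, -1}) (fun k hk => by simp [hsup k hk])
    rw [← hf, h1.unique h2]
    have hπ : (π : ℂ) ≠ 0 := by exact_mod_cast Real.pi_ne_zero
    have e1 : fourier 1 (θ : AddCircle (2 * π)) = Complex.exp (θ * Complex.I) := by
      rw [fourier_coe_apply]; congr 1; push_cast; field_simp
    have e2 : fourier (-1) (θ : AddCircle (2 * π)) = Complex.exp (-θ * Complex.I) := by
      rw [fourier_coe_apply]; congr 1; push_cast; field_simp
    rw [Finset.sum_insert (by decide), Finset.sum_insert (by decide), Finset.sum_singleton,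
      fourier_zero, e1, e2]
    simp only [smul_eq_mul]
    ring

/-! ### The isoperimetric inequality -/

lemma one_sub_cos_eq_sinc (x : ℝ) : 1 - Real.cos x = x ^ 2 / 2 * Real.sinc (x / 2) ^ 2 := by
  have h1 : Real.cos x = 1 - 2 * Real.sin (x / 2) ^ 2 := by
    have h := Real.cos_two_mul (x / 2)
    rw [mul_div_cancel₀ x two_ne_zero] at h
    nlinarith [Real.sin_sq_add_cos_sq (x / 2)]
  rcases eq_or_ne x 0 with rfl | hx
  · simp
  · rw [h1, Real.sinc_of_ne_zero (by positivity)]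
    field_simp
    ring

/-- The strict isoperimetric inequality for compact convex planar sets, with the perimeter
expressed as the integral of the support function. -/
lemma four_pi_mul_volume_lt_sq_integral {X : Set Plane} (hX : IsCompact X) (hconv : Convex ℝ X)
    {r : ℝ} (hr : 0 < r) (hball : closedBall 0 r ⊆ X)
    (hnd : ¬∃ (c : Plane) (r : ℝ), X = closedBall c r) :
    4 * π * (volume X).toReal < (∫ θ in (0)..(2 * π), supportFun X θ) ^ 2 := by
  have hne : X.Nonempty := ⟨0, hball (by simp [hr.le])⟩
  have hvol := fun (n : ℕ) (hn : 3 ≤ n) => volume_mul_le_integral hX hr hball hn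
  obtain ⟨c, hS, hD, h0, hrec⟩ :=
    exists_fourier_coefficients (continuous_supportFun hX hne) (supportFun_periodic X)
  set A := (volume X).toReal with hA
  set L := ∫ θ in (0)..(2 * π), supportFun X θ with hL
  set I := ∫ θ in (0)..(2 * π), supportFun X θ ^ 2 with hI
  set S := (2 * π)⁻¹ * I with hSdef
  have hIS : I = 2 * π * S := by rw [hSdef]; field_simp
  have hfin : ∀ s : Finset ℤ, A ≤ π * (S - ∑ k ∈ s, (k : ℝ) ^ 2 * ‖c k‖ ^ 2) := by
    intro s
    have hn : ∀ n : ℕ, 3 ≤ n → A * Real.sinc (2 * π / n) ≤ π * (Real.sinc (2 * π / n / 2) ^ 2 * S -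
        ∑ k ∈ s, (k : ℝ) ^ 2 * Real.sinc (k * (2 * π / n) / 2) ^ 2 * ‖c k‖ ^ 2) := by
      intro n hn
      have hn0 : (0 : ℝ) < n := by positivity
      have h1 := hvol n hn
      have h2 := hD (2 * π / n)
      set δ : ℝ := 2 * π / n with hδ
      have hδ0 : 0 < δ := by positivity
      set J := ∫ θ in (0)..(2 * π), (supportFun X (θ + δ) - supportFun X θ) ^ 2 with hJ
      have h3 := sum_le_hasSum s (fun k _ => mul_nonneg (mul_nonneg zero_le_two
        (sub_nonneg.2 (Real.cos_le_one _))) (sq_nonneg ‖c k‖)) h2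
      have h4 : δ ^ 2 * ∑ k ∈ s, (k : ℝ) ^ 2 * Real.sinc (k * δ / 2) ^ 2 * ‖c k‖ ^ 2 ≤
          (2 * π)⁻¹ * J := by
        rw [Finset.mul_sum]
        refine le_trans (le_of_eq (Finset.sum_congr rfl fun k _ => ?_)) h3
        rw [one_sub_cos_eq_sinc]
        ring
      have h5 : 2 * π * (δ ^ 2 * ∑ k ∈ s, (k : ℝ) ^ 2 * Real.sinc (k * δ / 2) ^ 2 * ‖c k‖ ^ 2) ≤
          J := by
        calc _ ≤ 2 * π * ((2 * π)⁻¹ * J) := by gcongr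
          _ = J := by field_simp
      rw [one_sub_cos_eq_sinc, hIS] at h1
      have h6 : Real.sin δ = δ * Real.sinc δ := by
        rw [Real.sinc_of_ne_zero hδ0.ne']; field_simp
      rw [h6] at h1
      refine le_of_mul_le_mul_left ?_ (pow_pos hδ0 2)
      linarith
    have hlim : Filter.Tendsto (fun n : ℕ => 2 * π / (n : ℝ)) Filter.atTop (nhds 0) :=
      tendsto_const_div_atTop_nhds_zero_nat _
    have hc1 : Continuous fun x : ℝ => A * Real.sinc x := by
      have := Real.continuous_sinc; fun_prop
    have hc2 : Continuous fun x : ℝ => π * (Real.sinc (x / 2) ^ 2 * S -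
        ∑ k ∈ s, (k : ℝ) ^ 2 * Real.sinc (k * x / 2) ^ 2 * ‖c k‖ ^ 2) := by
      have := Real.continuous_sinc; fun_prop
    have := le_of_tendsto_of_tendsto ((hc1.tendsto 0).comp hlim) ((hc2.tendsto 0).comp hlim)
      (Filter.eventually_atTop.2 ⟨3, hn⟩)
    simpa using this
  have hK : ∀ K : ℤ, K ≠ 0 → A ≤ π * (‖c 0‖ ^ 2 - ((K : ℝ) ^ 2 - 1) * ‖c K‖ ^ 2) := by
    intro K hK0
    have hlim : Filter.Tendsto (fun s : Finset ℤ => π * ((S - ∑ k ∈ s, ‖c k‖ ^ 2) + (‖c 0‖ ^ 2 -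
        ((K : ℝ) ^ 2 - 1) * ‖c K‖ ^ 2))) Filter.atTop
        (nhds (π * ((S - S) + (‖c 0‖ ^ 2 - ((K : ℝ) ^ 2 - 1) * ‖c K‖ ^ 2)))) :=
      ((tendsto_const_nhds.sub hS).add tendsto_const_nhds).const_mul π
    rw [sub_self, zero_add] at hlim
    refine ge_of_tendsto hlim (Filter.eventually_atTop.2 ⟨{0, K}, fun s hs => ?_⟩)
    refine (hfin s).trans (mul_le_mul_of_nonneg_left ?_ Real.pi_pos.le)
    have h1 : ∑ k ∈ ({0, K} : Finset ℤ), ((k : ℝ) ^ 2 - 1) * ‖c k‖ ^ 2 ≤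
        ∑ k ∈ s, ((k : ℝ) ^ 2 - 1) * ‖c k‖ ^ 2 := by
      refine Finset.sum_le_sum_of_subset_of_nonneg hs fun k _ hk => ?_
      simp only [Finset.mem_insert, Finset.mem_singleton, not_or] at hk
      have h2 : (1 : ℝ) ≤ (k : ℝ) ^ 2 := by
        have : (1 : ℤ) ≤ k ^ 2 := by have := sq_pos_of_ne_zero hk.1; omega
        exact_mod_cast this
      exact mul_nonneg (by linarith) (sq_nonneg _)
    rw [Finset.sum_pair hK0.symm] at h1
    simp only [sub_mul, one_mul, Finset.sum_sub_distrib] at h1 ⊢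
    norm_num at h1
    linarith
  have hc0 : ‖c 0‖ ^ 2 = L ^ 2 / (4 * π ^ 2) := by
    rw [h0, Complex.norm_real, Real.norm_eq_abs, sq_abs]
    field_simp
    ring
  obtain ⟨K, hK0, hK1, hK2, hcK⟩ : ∃ K : ℤ, K ≠ 0 ∧ K ≠ 1 ∧ K ≠ -1 ∧ c K ≠ 0 := by
    by_contra hcon
    push Not at hcon
    have hrec' := hrec hcon
    refine hnd ⟨!₂[(c 1 + c (-1)).re, (c (-1) - c 1).im], (c 0).re, ?_⟩
    refine eq_closedBall_of_supportFun_eq hX hconv hne fun θ => ?_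
    have h1 := congrArg Complex.re (hrec' θ)
    rw [inner_needleDir_right]
    rw [← Complex.ofReal_neg, Complex.exp_mul_I, Complex.exp_mul_I, ← Complex.ofReal_cos,
      ← Complex.ofReal_sin, ← Complex.ofReal_cos, ← Complex.ofReal_sin, Real.cos_neg,
      Real.sin_neg] at h1
    simp only [Complex.ofReal_re, Complex.add_re, Complex.mul_re, Complex.I_re, Complex.I_im,
      Complex.ofReal_im, Complex.add_im, Complex.mul_im] at h1
    simp only [Complex.add_re, Complex.sub_im, Matrix.cons_val_zero,
      Matrix.cons_val_one]
    linarith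
  have h1 := hK K hK0
  have h2 : 0 < ((K : ℝ) ^ 2 - 1) * ‖c K‖ ^ 2 := by
    have h3 : (1 : ℝ) < (K : ℝ) ^ 2 := by
      have : (1 : ℤ) < K ^ 2 := by
        rw [one_lt_sq_iff_one_lt_abs]
        rcases abs_cases K with ⟨h, _⟩ | ⟨h, _⟩ <;> omega
      exact_mod_cast this
    have h4 : 0 < ‖c K‖ := norm_pos_iff.2 hcK
    exact mul_pos (by linarith) (by positivity)
  have h5 : A < π * ‖c 0‖ ^ 2 := h1.trans_lt (mul_lt_mul_of_pos_left (by linarith) Real.pi_pos)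
  rw [hc0] at h5
  have h6 : π * (L ^ 2 / (4 * π ^ 2)) = L ^ 2 / (4 * π) := by field_simp
  rw [h6, lt_div_iff₀ (by positivity)] at h5
  linarith

/-! ### The perimeter bounds the integral of the support function -/

/-- The point in direction `φ` on the boundary of a convex body around the origin. -/
noncomputable def radialPoint (X : Set Plane) (φ : ℝ) : Plane :=
  (gauge X (needleDir φ))⁻¹ • needleDir φ

lemma needleDir_ne_zero (φ : ℝ) : needleDir φ ≠ 0 := by
  rw [← norm_pos_iff, norm_needleDir]; exact one_pos

lemma gauge_pos_of_closedBall_subset {X : Set Plane} {r : ℝ} (hX : IsCompact X) (hr : 0 < r)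
    (hball : closedBall 0 r ⊆ X) {v : Plane} (hv : v ≠ 0) : 0 < gauge X v :=
  (gauge_pos (absorbent_nhds_zero (Filter.mem_of_superset (closedBall_mem_nhds 0 hr) hball))
    (NormedSpace.isVonNBounded_iff ℝ |>.2 hX.isBounded)).2 hv

lemma radialPoint_periodic (X : Set Plane) : Function.Periodic (radialPoint X) (2 * π) := by
  intro φ; simp [radialPoint, needleDir_add_two_pi]

lemma continuous_radialPoint {X : Set Plane} {r : ℝ} (hX : IsCompact X) (hconv : Convex ℝ X)
    (hr : 0 < r) (hball : closedBall 0 r ⊆ X) : Continuous (radialPoint X) := by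
  have hg : Continuous (gauge X) := continuous_gauge hconv
    (Filter.mem_of_superset (closedBall_mem_nhds 0 hr) hball)
  refine Continuous.smul (Continuous.inv₀ (hg.comp continuous_needleDir) fun φ => ?_)
    continuous_needleDir
  exact (gauge_pos_of_closedBall_subset hX hr hball (needleDir_ne_zero φ)).ne'

lemma radialPoint_mem_frontier {X : Set Plane} {r : ℝ} (hX : IsCompact X) (hconv : Convex ℝ X)
    (hr : 0 < r) (hball : closedBall 0 r ⊆ X) (φ : ℝ) : radialPoint X φ ∈ frontier X := by
  rw [← gauge_eq_one_iff_mem_frontier hconv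
    (Filter.mem_of_superset (closedBall_mem_nhds 0 hr) hball)]
  have h := gauge_pos_of_closedBall_subset hX hr hball (needleDir_ne_zero φ)
  rw [radialPoint, gauge_smul_of_nonneg (inv_nonneg.2 h.le), smul_eq_mul, inv_mul_cancel₀ h.ne']

lemma injOn_radialPoint {X : Set Plane} {r : ℝ} (hX : IsCompact X)
    (hr : 0 < r) (hball : closedBall 0 r ⊆ X) (a : ℝ) :
    InjOn (radialPoint X) (Ioc a (a + 2 * π)) := by
  intro φ hφ ψ hψ h
  have h1 := gauge_pos_of_closedBall_subset hX hr hball (needleDir_ne_zero φ)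
  have h2 := gauge_pos_of_closedBall_subset hX hr hball (needleDir_ne_zero ψ)
  have hn : gauge X (needleDir φ) = gauge X (needleDir ψ) := by
    have := congrArg norm h
    simpa [radialPoint, norm_smul, abs_of_pos h1, abs_of_pos h2] using this
  rw [radialPoint, radialPoint, hn] at h
  have hu : needleDir φ = needleDir ψ := smul_right_injective _ (inv_ne_zero h2.ne') h
  have hc : Real.cos (φ - ψ) = 1 := by
    rw [← inner_needleDir, hu, inner_needleDir]; simp
  have := (Real.cos_eq_one_iff_of_lt_of_lt (by linarith [hφ.1, hψ.2])
    (by linarith [hφ.2, hψ.1])).1 hc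
  linarith

lemma ofReal_dist_le_hausdorffMeasure_image {γ : ℝ → Plane} (hγ : Continuous γ) {a b : ℝ}
    (hab : a ≤ b) : ENNReal.ofReal (dist (γ b) (γ a)) ≤ μH[1] (γ '' Ioc a b) := by
  have h1 : Ioc 0 (dist (γ b) (γ a)) ⊆ (fun x => dist x (γ a)) '' (γ '' Ioc a b) := by
    rw [image_image]
    have := intermediate_value_Ioc (f := fun t => dist (γ t) (γ a)) hab (by fun_prop)
    simpa using this
  have h2 : LipschitzWith 1 (fun x : Plane => dist x (γ a)) := LipschitzWith.dist_left (γ a)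
  have h3 := h2.hausdorffMeasure_image_le (d := 1) zero_le_one (γ '' Ioc a b)
  have h4 := (measure_mono h1).trans h3
  rw [hausdorffMeasure_real, Real.volume_Ioc] at h4
  simpa using h4

/-- Polygons inscribed in the boundary are no longer than the boundary. -/
lemma sum_dist_radialPoint_le {X : Set Plane} {r ℓ : ℝ} (hX : IsCompact X)
    (hconv : Convex ℝ X) (hr : 0 < r) (hball : closedBall 0 r ⊆ X) (hℓ : 0 ≤ ℓ)
    (hper : μH[1] (frontier X) ≤ ENNReal.ofReal ℓ) {w : ℕ → ℝ} (hw : Monotone w) {n : ℕ}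
    (hwn : w n = w 0 + 2 * π) :
    ∑ i ∈ Finset.range n, dist (radialPoint X (w (i + 1))) (radialPoint X (w i)) ≤ ℓ := by
  have hc := continuous_radialPoint hX hconv hr hball
  have hinj := injOn_radialPoint hX hr hball (w 0)
  have hsub : ∀ i ∈ Finset.range n, Ioc (w i) (w (i + 1)) ⊆ Ioc (w 0) (w 0 + 2 * π) := by
    intro i hi
    rw [← hwn]
    exact Ioc_subset_Ioc (hw (Nat.zero_le i)) (hw (Finset.mem_range.1 hi))
  have hdisj : PairwiseDisjoint (↑(Finset.range n))
      (fun i => radialPoint X '' Ioc (w i) (w (i + 1))) := by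
    intro i hi j hj hij
    have := hw.pairwise_disjoint_on_Ioc_succ hij
    simp only [Function.onFun, Order.succ_eq_add_one] at this ⊢
    rw [disjoint_left]
    rintro _ ⟨s, hs, rfl⟩ ⟨t, ht, hst⟩
    rw [hinj (hsub j hj ht) (hsub i hi hs) hst] at ht
    exact disjoint_left.1 this hs ht
  have hmeas : ∀ i ∈ Finset.range n,
      MeasurableSet (radialPoint X '' Ioc (w i) (w (i + 1))) := fun i hi =>
    measurableSet_Ioc.image_of_continuousOn_injOn hc.continuousOn (hinj.mono (hsub i hi))
  rw [← ENNReal.ofReal_le_ofReal_iff hℓ, ENNReal.ofReal_sum_of_nonneg fun _ _ => dist_nonneg]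
  calc _ ≤ ∑ i ∈ Finset.range n, μH[1] (radialPoint X '' Ioc (w i) (w (i + 1))) :=
        Finset.sum_le_sum fun i _ => ofReal_dist_le_hausdorffMeasure_image hc (hw (Nat.le_succ i))
    _ = μH[1] (⋃ i ∈ Finset.range n, radialPoint X '' Ioc (w i) (w (i + 1))) :=
        (measure_biUnion_finset hdisj hmeas).symm
    _ ≤ μH[1] (frontier X) := by
        refine measure_mono (iUnion₂_subset fun i _ => ?_)
        rintro _ ⟨φ, _, rfl⟩
        exact radialPoint_mem_frontier hX hconv hr hball φ
    _ ≤ _ := hper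

lemma supportFun_le_inner_radialPoint {X : Set Plane} {r : ℝ} (hX : IsCompact X)
    (hr : 0 < r) (hball : closedBall 0 r ⊆ X) (θ : ℝ) :
    ∃ φ, supportFun X θ ≤ ⟪radialPoint X φ, needleDir θ⟫ := by
  have hne : X.Nonempty := ⟨0, hball (by simp [hr.le])⟩
  obtain ⟨p, hp, hpθ⟩ := exists_inner_eq_supportFun hX hne θ
  have hH : 0 < supportFun X θ :=
    hr.trans_le (le_supportFun_of_closedBall_subset hX hr.le hball θ)
  obtain ⟨φ, hφ⟩ := exists_eq_norm_smul_needleDir p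
  have hp0 : 0 < ‖p‖ := by
    rw [norm_pos_iff]; rintro rfl; simp [← hpθ] at hH
  have hg := gauge_pos_of_closedBall_subset hX hr hball (needleDir_ne_zero φ)
  have h1 : ‖p‖ * gauge X (needleDir φ) ≤ 1 := by
    have := gauge_le_one_of_mem hp
    rwa [hφ, gauge_smul_of_nonneg (norm_nonneg _), smul_eq_mul] at this
  refine ⟨φ, ?_⟩
  have h2 : ‖p‖ ≤ (gauge X (needleDir φ))⁻¹ := by
    rw [le_inv_comm₀ hp0 hg, ← one_div, le_div_iff₀ hp0]; linarith
  rw [hφ, real_inner_smul_left] at hpθ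
  rw [radialPoint, real_inner_smul_left, ← hpθ]
  have h3 : 0 < ⟪needleDir φ, needleDir θ⟫ := by
    rw [← hpθ] at hH; exact pos_of_mul_pos_right hH hp0.le
  exact mul_le_mul_of_nonneg_right h2 h3.le

lemma integral_abs_cos_sub (α : ℝ) : ∫ θ in (0)..(2 * π), |Real.cos (α - θ)| = 4 := by
  have hper : Function.Periodic (fun θ => |Real.cos (α - θ)|) (2 * π) := by
    intro θ
    simp only
    rw [show α - (θ + 2 * π) = α - θ - 2 * π by ring, Real.cos_sub_two_pi]
  have h0 := hper.intervalIntegral_add_eq 0 (α - π / 2)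
  rw [zero_add] at h0
  have hint : ∀ a b : ℝ, IntervalIntegrable (fun θ => |Real.cos (α - θ)|) volume a b :=
    fun a b => Continuous.intervalIntegrable (by fun_prop) a b
  rw [h0, ← intervalIntegral.integral_add_adjacent_intervals (b := α + π / 2)
    (hint _ _) (hint _ _)]
  have hpi := Real.pi_pos
  have e1 : ∫ θ in (α - π / 2)..(α + π / 2), |Real.cos (α - θ)| = 2 := by
    have : ∫ θ in (α - π / 2)..(α + π / 2), |Real.cos (α - θ)| =
        ∫ θ in (α - π / 2)..(α + π / 2), Real.cos (α - θ) := by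
      refine intervalIntegral.integral_congr fun θ hθ => ?_
      rw [uIcc_of_le (by linarith)] at hθ
      exact abs_of_nonneg (Real.cos_nonneg_of_neg_pi_div_two_le_of_le
        (by linarith [hθ.2]) (by linarith [hθ.1]))
    rw [this, intervalIntegral.integral_comp_sub_left (fun x => Real.cos x), integral_cos]
    rw [show α - (α - π / 2) = π / 2 by ring, show α - (α + π / 2) = -(π / 2) by ring,
      Real.sin_neg, Real.sin_pi_div_two]
    norm_num
  have e2 : ∫ θ in (α + π / 2)..(α - π / 2 + 2 * π), |Real.cos (α - θ)| = 2 := by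
    have : ∫ θ in (α + π / 2)..(α - π / 2 + 2 * π), |Real.cos (α - θ)| =
        ∫ θ in (α + π / 2)..(α - π / 2 + 2 * π), -Real.cos (α - θ) := by
      refine intervalIntegral.integral_congr fun θ hθ => ?_
      rw [uIcc_of_le (by linarith)] at hθ
      have : Real.cos (α - θ) = Real.cos (θ - α) := by rw [← Real.cos_neg]; ring_nf
      simp only [this]
      exact abs_of_nonpos (Real.cos_nonpos_of_pi_div_two_le_of_le
        (by linarith [hθ.1]) (by linarith [hθ.2]))
    rw [this, intervalIntegral.integral_neg,
      intervalIntegral.integral_comp_sub_left (fun x => Real.cos x), integral_cos]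
    rw [show α - (α - π / 2 + 2 * π) = π / 2 - 2 * π by ring,
      show α - (α + π / 2) = -(π / 2) by ring, Real.sin_sub_two_pi,
      Real.sin_neg, Real.sin_pi_div_two]
    norm_num
  rw [e1, e2]; norm_num

lemma integral_abs_inner_needleDir (v : Plane) :
    ∫ θ in (0)..(2 * π), |⟪v, needleDir θ⟫| = 4 * ‖v‖ := by
  obtain ⟨α, hα⟩ := exists_eq_norm_smul_needleDir v
  have : ∀ θ, |⟪v, needleDir θ⟫| = ‖v‖ * |Real.cos (α - θ)| := by
    intro θ
    conv_lhs => rw [hα]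
    rw [real_inner_smul_left, inner_needleDir, abs_mul, abs_norm]
  simp_rw [this]
  rw [intervalIntegral.integral_const_mul, integral_abs_cos_sub]; ring

/-- A closed cycle of reals has variation at least twice its spread. -/
lemma two_mul_sub_le_sum_abs {f : ℕ → ℝ} {n j m : ℕ} (hf : f n = f 0) (hj : j ≤ n)
    (hm : m ≤ n) : 2 * (f j - f m) ≤ ∑ i ∈ Finset.range n, |f (i + 1) - f i| := by
  wlog h : j ≤ m generalizing f j m
  · have := this (f := fun i => -f i) (j := m) (m := j) (by simp [hf]) hm hj (by omega)
    refine le_trans (by linarith) (this.trans_eq (Finset.sum_congr rfl fun i _ => ?_))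
    rw [← abs_neg]; congr 1; ring
  have e : ∀ i, |f (i + 1) - f i| = dist (f i) (f (i + 1)) := fun i => by
    rw [dist_comm, Real.dist_eq]
  simp_rw [e]
  rw [Finset.range_eq_Ico, ← Finset.sum_Ico_consecutive _ (Nat.zero_le j) hj,
    ← Finset.sum_Ico_consecutive _ h hm]
  have h1 := dist_le_Ico_sum_dist f (Nat.zero_le j)
  have h2 := dist_le_Ico_sum_dist f h
  have h3 := dist_le_Ico_sum_dist f hm
  rw [Real.dist_eq] at h1 h2 h3
  have h4 := le_abs_self (f j - f m)
  have h5 := neg_le_abs (f 0 - f j)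
  have h6 := neg_le_abs (f m - f n)
  linarith

/-- The integral of the support function is at most the perimeter. -/
lemma integral_supportFun_le {X : Set Plane} {r ℓ : ℝ} (hX : IsCompact X)
    (hconv : Convex ℝ X) (hr : 0 < r) (hball : closedBall 0 r ⊆ X) (hℓ : 0 ≤ ℓ)
    (hper : μH[1] (frontier X) ≤ ENNReal.ofReal ℓ) :
    ∫ θ in (0)..(2 * π), supportFun X θ ≤ ℓ := by
  have hc := continuous_radialPoint hX hconv hr hball
  have hne : X.Nonempty := ⟨0, hball (by simp [hr.le])⟩
  have hH := continuous_supportFun hX hne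
  have hpi := Real.pi_pos
  have hshift : ∫ θ in (0)..(2 * π), supportFun X (θ + π) =
      ∫ θ in (0)..(2 * π), supportFun X θ := by
    have := (supportFun_periodic X).intervalIntegral_add_eq 0 π
    rw [intervalIntegral.integral_comp_add_right (fun θ => supportFun X θ)]
    rw [zero_add] at this
    rw [this]; ring_nf
  refine le_of_forall_pos_le_add fun ε hε => ?_
  obtain ⟨δ, hδ, hunif⟩ := Metric.uniformContinuousOn_iff.1
    (isCompact_Icc.uniformContinuousOn_of_continuous (hc.continuousOn (s := Icc 0 (2 * π))))
    (ε / (2 * π)) (by positivity)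
  obtain ⟨n, hn⟩ := exists_nat_gt (2 * π / δ)
  have hn0 : (0 : ℝ) < n := lt_of_le_of_lt (by positivity) hn
  set w : ℕ → ℝ := fun i => 2 * π / n * i with hwdef
  have hw : Monotone w := fun i j hij => by
    have : (i : ℝ) ≤ j := by exact_mod_cast hij
    simp only [hwdef]; gcongr
  have hw0 : w 0 = 0 := by simp [hwdef]
  have hwn : w n = w 0 + 2 * π := by simp [hwdef]; field_simp
  have hstep : 2 * π / n < δ := by
    rw [div_lt_iff₀ hδ] at hn
    rw [div_lt_iff₀ hn0]; linarith
  have hnear : ∀ φ, ∃ j ≤ n, dist (radialPoint X φ) (radialPoint X (w j)) < ε / (2 * π) := by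
    intro φ
    obtain ⟨ψ, hψ, hφψ⟩ := (radialPoint_periodic X).exists_mem_Ico₀ (by positivity) φ
    refine ⟨⌊ψ / (2 * π / n)⌋₊, ?_, ?_⟩
    · refine Nat.floor_le_of_le ?_
      rw [div_le_iff₀ (by positivity), mul_div_cancel₀ _ hn0.ne']; exact hψ.2.le
    · have hd : (0 : ℝ) < 2 * π / n := by positivity
      have h1 := Nat.floor_le (div_nonneg hψ.1 hd.le)
      have h2 := Nat.lt_floor_add_one (ψ / (2 * π / n))
      rw [le_div_iff₀ hd] at h1
      rw [div_lt_iff₀ hd] at h2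
      have h3 : w ⌊ψ / (2 * π / n)⌋₊ ≤ ψ := by simp only [hwdef]; linarith
      have h4 : ψ < w ⌊ψ / (2 * π / n)⌋₊ + 2 * π / n := by simp only [hwdef]; linarith
      rw [hφψ]
      refine hunif ψ ⟨hψ.1, hψ.2.le⟩ _ ⟨by simp only [hwdef]; positivity, by linarith [hψ.2]⟩ ?_
      rw [Real.dist_eq, abs_of_nonneg (by linarith)]; linarith
  have hgood : ∀ θ, ∃ j ≤ n,
      supportFun X θ - ε / (2 * π) ≤ ⟪radialPoint X (w j), needleDir θ⟫ := by
    intro θ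
    obtain ⟨φ, hφ⟩ := supportFun_le_inner_radialPoint hX hr hball θ
    obtain ⟨j, hj, hd⟩ := hnear φ
    refine ⟨j, hj, ?_⟩
    have h1 := real_inner_le_norm (radialPoint X φ - radialPoint X (w j)) (needleDir θ)
    rw [inner_sub_left, norm_needleDir, mul_one, ← dist_eq_norm] at h1
    linarith
  have hpt : ∀ θ, 2 * (supportFun X θ + supportFun X (θ + π) - 2 * (ε / (2 * π))) ≤
      ∑ i ∈ Finset.range n,
        |⟪radialPoint X (w (i + 1)) - radialPoint X (w i), needleDir θ⟫| := by
    intro θ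
    obtain ⟨j, hj, hj'⟩ := hgood θ
    obtain ⟨m, hm, hm'⟩ := hgood (θ + π)
    rw [needleDir_add_pi, inner_neg_right] at hm'
    have := two_mul_sub_le_sum_abs (f := fun i => ⟪radialPoint X (w i), needleDir θ⟫)
      (by simp only [hwn, radialPoint_periodic X (w 0)]) hj hm
    simp only [← inner_sub_left] at this
    refine le_trans ?_ this
    rw [inner_sub_left]
    linarith
  have hsum := sum_dist_radialPoint_le hX hconv hr hball hℓ hper hw hwn
  have hint : ∫ θ in (0)..(2 * π),
      2 * (supportFun X θ + supportFun X (θ + π) - 2 * (ε / (2 * π))) ≤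
      ∫ θ in (0)..(2 * π), ∑ i ∈ Finset.range n,
        |⟪radialPoint X (w (i + 1)) - radialPoint X (w i), needleDir θ⟫| := by
    have := continuous_needleDir
    refine intervalIntegral.integral_mono (by positivity) ?_ ?_ hpt
    · exact Continuous.intervalIntegrable (by fun_prop) _ _
    · exact Continuous.intervalIntegrable (by fun_prop) _ _
  have hdir := continuous_needleDir
  have hH' : Continuous fun θ => supportFun X (θ + π) := hH.comp (by fun_prop)
  rw [intervalIntegral.integral_finsetSum fun i _ =>
    Continuous.intervalIntegrable (by fun_prop) _ _] at hint
  simp_rw [integral_abs_inner_needleDir] at hint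
  rw [← Finset.mul_sum, intervalIntegral.integral_const_mul,
    intervalIntegral.integral_sub (Continuous.intervalIntegrable (by fun_prop) _ _)
      (continuous_const.intervalIntegrable _ _),
    intervalIntegral.integral_add (hH.intervalIntegrable _ _) (hH'.intervalIntegrable _ _),
    hshift, intervalIntegral.integral_const, smul_eq_mul] at hint
  simp_rw [← dist_eq_norm] at hint
  have : (2 * π - 0) * (2 * (ε / (2 * π))) = 2 * ε := by field_simp; ring
  rw [this] at hint
  linarith

/-! ### Translating a convex set along a direction -/

lemma volume_mem_and_add_notMem_le {I : Set ℝ} (hI : IsCompact I) (hconv : I.OrdConnected)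
    {l : ℝ} (hl : 0 ≤ l) : volume {s | s ∈ I ∧ s + l ∉ I} ≤ ENNReal.ofReal l := by
  rcases I.eq_empty_or_nonempty with rfl | hne
  · simp
  have hb := hI.sSup_mem hne
  calc volume {s | s ∈ I ∧ s + l ∉ I} ≤ volume (Ioc (sSup I - l) (sSup I)) := by
        refine measure_mono fun s hs => ⟨?_, le_csSup hI.bddAbove hs.1⟩
        by_contra! h
        exact hs.2 (hconv.out hs.1 hb ⟨by linarith, by linarith⟩)
    _ = _ := by rw [Real.volume_Ioc]; congr 1; ring

lemma le_volume_mem_and_add_notMem {I : Set ℝ} (hI : IsCompact I) (hconv : I.OrdConnected)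
    {l c : ℝ} (hc : c ∈ I) (hcl : c + l ∈ I) :
    ENNReal.ofReal l ≤ volume {s | s ∈ I ∧ s + l ∉ I} := by
  have hb := hI.sSup_mem ⟨c, hc⟩
  calc ENNReal.ofReal l = volume (Ioc (sSup I - l) (sSup I)) := by
        rw [Real.volume_Ioc]; congr 1; ring
    _ ≤ _ := by
        refine measure_mono fun s hs => ⟨?_, fun h => ?_⟩
        · have := le_csSup hI.bddAbove hcl
          exact hconv.out hc hb ⟨by linarith [hs.1], hs.2⟩
        · have := le_csSup hI.bddAbove h
          linarith [hs.1]

lemma rotatedFrame_add (θ s t l : ℝ) :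
    rotatedFrame θ (s + l, t) = rotatedFrame θ (s, t) + l • needleDir θ := by
  simp only [rotatedFrame]; module

lemma isCompact_fiber {X : Set Plane} (hX : IsCompact X) (θ t : ℝ) :
    IsCompact {s | rotatedFrame θ (s, t) ∈ X} := by
  have hc : Continuous fun s : ℝ => rotatedFrame θ (s, t) :=
    (continuous_rotatedFrame θ).comp (by fun_prop)
  refine Metric.isCompact_of_isClosed_isBounded (hX.isClosed.preimage hc) ?_
  obtain ⟨R, hR⟩ := hX.isBounded.exists_norm_le
  refine (Metric.isBounded_iff_subset_closedBall 0).2 ⟨R, fun s hs => ?_⟩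
  have h1 := abs_real_inner_le_norm (rotatedFrame θ (s, t)) (needleDir θ)
  rw [inner_rotatedFrame, norm_needleDir] at h1
  simp only [sub_self, Real.cos_zero, Real.sin_zero, mul_one, mul_zero, sub_zero] at h1
  rw [mem_closedBall_zero_iff, Real.norm_eq_abs]
  exact h1.trans (hR _ hs)

lemma ordConnected_fiber {X : Set Plane} (hconv : Convex ℝ X) (θ t : ℝ) :
    {s | rotatedFrame θ (s, t) ∈ X}.OrdConnected := by
  refine Convex.ordConnected fun s hs s' hs' a b ha hb hab => ?_
  have := hconv hs hs' ha hb hab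
  simp only [mem_ofPred_eq, smul_eq_mul]
  convert this using 1
  simp only [rotatedFrame]
  have : t = (a + b) * t := by rw [hab, one_mul]
  conv_lhs => rw [this]
  module

/-- The points of `X` from which the needle in direction `θ` leaves `X`. -/
def exitSet (X : Set Plane) (l θ : ℝ) : Set Plane :=
  {x | x ∈ X ∧ x + l • needleDir θ ∉ X}

lemma measurableSet_exitSet {X : Set Plane} (hX : IsCompact X) (l θ : ℝ) :
    MeasurableSet (exitSet X l θ) :=
  hX.isClosed.measurableSet.inter
    ((hX.isClosed.preimage (by fun_prop : Continuous fun x : Plane => x + l • needleDir θ))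
      |>.measurableSet.compl)

lemma volume_exitSet {X : Set Plane} (hX : IsCompact X) (l θ : ℝ) :
    volume (exitSet X l θ) = ∫⁻ t, volume {s | s ∈ {s | rotatedFrame θ (s, t) ∈ X} ∧
      s + l ∉ {s | rotatedFrame θ (s, t) ∈ X}} := by
  have hm := measurableSet_exitSet hX l θ
  rw [← (measurePreserving_rotatedFrame θ).measure_preimage hm.nullMeasurableSet,
    Measure.volume_eq_prod,
    Measure.prod_apply_symm ((measurePreserving_rotatedFrame θ).measurable hm)]
  simp only [mem_ofPred_eq, rotatedFrame_add]
  rfl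

lemma volume_exitSet_unitDisk_le {l : ℝ} (hl : 0 ≤ l) (θ : ℝ) :
    volume (exitSet (closedBall 0 1) l θ) ≤ ENNReal.ofReal l * 2 := by
  have hX := isCompact_closedBall (0 : Plane) 1
  rw [volume_exitSet hX]
  calc _ ≤ ∫⁻ t, (Icc (-1 : ℝ) 1).indicator (fun _ => ENNReal.ofReal l) t := by
        refine lintegral_mono fun t => ?_
        by_cases ht : t ∈ Icc (-1 : ℝ) 1
        · rw [indicator_of_mem ht]
          exact volume_mem_and_add_notMem_le (isCompact_fiber hX θ t)
            (ordConnected_fiber (convex_closedBall _ _) θ t) hl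
        · rw [indicator_of_notMem ht]
          refine (measure_mono_null (t := ∅) (fun s hs => ht ?_) measure_empty).le
          have h1 := abs_real_inner_le_norm (rotatedFrame θ (s, t)) (needleDir (θ + π / 2))
          rw [inner_rotatedFrame, norm_needleDir] at h1
          have h2 : ‖rotatedFrame θ (s, t)‖ ≤ 1 := mem_closedBall_zero_iff.1 hs.1
          rw [mem_Icc, ← abs_le]
          simp only [sub_add_cancel_left, Real.cos_neg, Real.cos_pi_div_two, Real.sin_neg,
            Real.sin_pi_div_two, mul_zero, mul_neg, mul_one, sub_neg_eq_add, zero_add] at h1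
          linarith
    _ = _ := by
        rw [lintegral_indicator measurableSet_Icc, setLIntegral_const, Real.volume_Icc]
        norm_num

lemma le_volume_exitSet {X : Set Plane} {r τ : ℝ} (hX : IsCompact X) (hconv : Convex ℝ X)
    (hr : 0 < r) (hball : closedBall 0 r ⊆ X) (hτ0 : 0 ≤ τ) (hτ1 : τ < 1) (θ : ℝ) :
    ENNReal.ofReal (2 * τ * r * ((1 - τ) *
      (supportFun X (θ + π / 2) + supportFun X (θ - π / 2)))) ≤
      volume (exitSet X (2 * τ * r) θ) := by
  have hne : X.Nonempty := ⟨0, hball (by simp [hr.le])⟩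
  set a := -((1 - τ) * supportFun X (θ - π / 2)) with ha
  set b := (1 - τ) * supportFun X (θ + π / 2) with hb
  have hτ : 0 < 1 - τ := by linarith
  rw [volume_exitSet hX]
  have hpt : ∀ t ∈ Icc a b, ENNReal.ofReal (2 * τ * r) ≤
      volume {s | s ∈ {s | rotatedFrame θ (s, t) ∈ X} ∧
        s + 2 * τ * r ∉ {s | rotatedFrame θ (s, t) ∈ X}} := by
    intro t ht
    obtain ⟨p, hp, hp'⟩ := exists_inner_eq_supportFun hX hne (θ + π / 2)
    obtain ⟨q, hq, hq'⟩ := exists_inner_eq_supportFun hX hne (θ - π / 2)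
    have hneg : needleDir (θ - π / 2) = -needleDir (θ + π / 2) := by
      rw [← needleDir_add_pi, ← needleDir_add_two_pi (θ - π / 2)]; congr 1; ring
    rw [hneg, inner_neg_right] at hq'
    obtain ⟨y, hy, hyt⟩ : ∃ y ∈ X, ⟪y, needleDir (θ + π / 2)⟫ = t / (1 - τ) := by
      have hcont : ContinuousOn (fun y : Plane => ⟪y, needleDir (θ + π / 2)⟫) X := by
        fun_prop
      have := hconv.isPreconnected.intermediate_value hq hp hcont
      refine this ⟨?_, ?_⟩
      · rw [le_div_iff₀ hτ]; rw [mul_comm, neg_eq_iff_eq_neg.1 hq', mul_neg]; exact ht.1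
      · rw [div_le_iff₀ hτ]; rw [mul_comm, hp']; exact ht.2
    have hy' : (1 - τ) • y = rotatedFrame θ (⟪(1 - τ) • y, needleDir θ⟫, t) := by
      have := rotatedFrame_inner θ ((1 - τ) • y)
      rw [real_inner_smul_left _ (needleDir (θ + π / 2)), hyt, mul_div_cancel₀ _ hτ.ne'] at this
      exact this.symm
    have hmem : ∀ σ : ℝ, |σ| = r → (1 - τ) • y + τ • (σ • needleDir θ) ∈ X := by
      intro σ hσ
      refine hconv hy (hball ?_) hτ.le hτ0 (by ring)
      rw [mem_closedBall_zero_iff, norm_smul, norm_needleDir, Real.norm_eq_abs, hσ, mul_one]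
    refine le_volume_mem_and_add_notMem (isCompact_fiber hX θ t) (ordConnected_fiber hconv θ t)
      (c := ⟪(1 - τ) • y, needleDir θ⟫ + τ * (-r)) ?_ ?_
    · rw [mem_ofPred_eq, rotatedFrame_add, ← hy', mul_smul]
      exact hmem _ (by rw [abs_neg, abs_of_pos hr])
    · rw [show ⟪(1 - τ) • y, needleDir θ⟫ + τ * (-r) + 2 * τ * r =
        ⟪(1 - τ) • y, needleDir θ⟫ + τ * r by ring]
      rw [mem_ofPred_eq, rotatedFrame_add, ← hy', mul_smul]
      exact hmem _ (abs_of_pos hr)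
  calc _ = ∫⁻ t in Icc a b, ENNReal.ofReal (2 * τ * r) := by
        rw [setLIntegral_const, Real.volume_Icc, ← ENNReal.ofReal_mul (by positivity)]
        congr 1; rw [ha, hb]; ring
    _ ≤ _ := setLIntegral_mono' measurableSet_Icc hpt
    _ ≤ _ := setLIntegral_le_lintegral _ _

/-! ### The Buffon probability as an average over directions -/

lemma integral_volume_needleAngles {X : Set Plane} (hX : IsCompact X) (l : ℝ) :
    ∫ x in X, (volume (needleAngles X l x)).toReal =
      (∫⁻ θ in Ico 0 (2 * π), (volume X - volume (exitSet X l θ))).toReal := by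
  have hdir := continuous_needleDir
  let S : Set (Plane × ℝ) := {p | p.1 ∈ X ∧ p.2 ∈ Ico 0 (2 * π) ∧ p.1 + l • needleDir p.2 ∈ X}
  have hS : MeasurableSet S := by
    refine (hX.isClosed.preimage continuous_fst).measurableSet.inter
      ((measurable_snd measurableSet_Ico).inter ?_)
    exact (hX.isClosed.preimage (by fun_prop :
      Continuous fun p : Plane × ℝ => p.1 + l • needleDir p.2)).measurableSet
  have hfib : ∀ x, volume (Prod.mk x ⁻¹' S) =
      X.indicator (fun x => volume (needleAngles X l x)) x := by
    intro x
    by_cases hx : x ∈ X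
    · rw [indicator_of_mem hx]
      congr 1; ext θ; simp [S, hx, needleAngles]
    · rw [indicator_of_notMem hx]
      convert measure_empty (μ := (volume : Measure ℝ))
      ext θ; simp [S, hx]
  have hfib' : ∀ θ, volume ((fun x => (x, θ)) ⁻¹' S) =
      (Ico 0 (2 * π)).indicator (fun θ => volume X - volume (exitSet X l θ)) θ := by
    intro θ
    by_cases hθ : θ ∈ Ico 0 (2 * π)
    · rw [indicator_of_mem hθ, ← measure_sdiff (fun x hx => hx.1)
        (measurableSet_exitSet hX l θ).nullMeasurableSet
        ((measure_mono fun x hx => hx.1).trans_lt hX.measure_lt_top).ne]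
      congr 1; ext x
      simp only [S, exitSet, mem_preimage, mem_ofPred_eq, mem_sdiff, hθ, true_and]
      tauto
    · rw [indicator_of_notMem hθ]
      convert measure_empty (μ := (volume : Measure Plane))
      ext x; simp only [S, mem_preimage, mem_ofPred_eq, hθ, mem_empty_iff_false]; tauto
  have hfibm : Measurable fun x => volume (Prod.mk x ⁻¹' S) := measurable_measure_prodMk_left hS
  rw [integral_toReal]
  · congr 1
    rw [← lintegral_indicator hX.isClosed.measurableSet, ← lintegral_indicator measurableSet_Ico]
    simp_rw [← hfib, ← hfib']
    rw [← Measure.prod_apply hS, ← Measure.prod_apply_symm hS]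
  · refine AEMeasurable.congr (hfibm.aemeasurable) ?_
    filter_upwards [ae_restrict_mem hX.isClosed.measurableSet] with x hx
    rw [hfib, indicator_of_mem hx]
  · refine Filter.Eventually.of_forall fun x => ?_
    exact (measure_mono fun θ hθ => hθ.1).trans_lt
      (by rw [Real.volume_Ico]; exact ENNReal.ofReal_lt_top : volume (Ico 0 (2 * π)) < ⊤)

lemma le_buffonProb_unitDisk {l : ℝ} (hl : 0 < l) :
    1 - 2 * l / π ≤ buffonProb (closedBall 0 1) l := by
  have hX := isCompact_closedBall (0 : Plane) 1
  have hpi := Real.pi_pos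
  have hvol : volume (closedBall (0 : Plane) 1) = ENNReal.ofReal π := by
    rw [EuclideanSpace.volume_closedBall_fin_two]; simp [ENNReal.ofReal, Real.toNNReal, max_eq_left hpi.le]
  rw [buffonProb, if_neg (by rw [hvol]; simp [hpi]), integral_volume_needleAngles hX, hvol,
    ENNReal.toReal_ofReal hpi.le]
  have hle : ENNReal.ofReal ((π - 2 * l) * (2 * π)) ≤
      ∫⁻ θ in Ico 0 (2 * π), (ENNReal.ofReal π - volume (exitSet (closedBall 0 1) l θ)) := by
    calc _ = ∫⁻ θ in Ico 0 (2 * π), ENNReal.ofReal (π - 2 * l) := by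
          rw [setLIntegral_const, Real.volume_Ico, sub_zero, ENNReal.ofReal_mul' (by positivity)]
      _ ≤ _ := by
          refine lintegral_mono fun θ => ?_
          rw [ENNReal.ofReal_sub _ (by positivity)]
          refine tsub_le_tsub_left ((volume_exitSet_unitDisk_le hl.le θ).trans_eq ?_) _
          rw [ENNReal.ofReal_mul (by norm_num), mul_comm]; norm_num
  have hfin : ∫⁻ θ in Ico 0 (2 * π),
      (ENNReal.ofReal π - volume (exitSet (closedBall 0 1) l θ)) ≠ ⊤ := by
    refine ((lintegral_mono fun θ => tsub_le_self).trans_lt ?_).ne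
    rw [setLIntegral_const, Real.volume_Ico]
    exact ENNReal.mul_lt_top ENNReal.ofReal_lt_top ENNReal.ofReal_lt_top
  have := (ENNReal.ofReal_le_iff_le_toReal hfin).1 hle
  calc 1 - 2 * l / π = 1 / (2 * π * π) * ((π - 2 * l) * (2 * π)) := by field_simp
    _ ≤ _ := mul_le_mul_of_nonneg_left this (by positivity)

lemma buffonProb_le {X : Set Plane} {r τ : ℝ} (hX : IsCompact X) (hconv : Convex ℝ X)
    (hr : 0 < r) (hball : closedBall 0 r ⊆ X) (hτ0 : 0 ≤ τ) (hτ1 : τ < 1) :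
    buffonProb X (2 * τ * r) ≤ 1 - 2 * τ * r * (1 - τ) *
      (∫ θ in (0)..(2 * π), supportFun X θ) / (π * (volume X).toReal) := by
  have hne : X.Nonempty := ⟨0, hball (by simp [hr.le])⟩
  have hpi := Real.pi_pos
  have hH := continuous_supportFun hX hne
  have hA : 0 < volume X := (measure_closedBall_pos volume 0 hr).trans_le (measure_mono hball)
  have hA' : 0 < (volume X).toReal := ENNReal.toReal_pos hA.ne' hX.measure_ne_top
  have hshift : ∀ c, ∫ θ in (0)..(2 * π), supportFun X (θ + c) =
      ∫ θ in (0)..(2 * π), supportFun X θ := by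
    intro c
    have := (supportFun_periodic X).intervalIntegral_add_eq 0 c
    rw [intervalIntegral.integral_comp_add_right (fun θ => supportFun X θ)]
    rw [zero_add] at this
    rw [this]; ring_nf
  set W : ℝ → ℝ := fun θ => 2 * τ * r * ((1 - τ) *
      (supportFun X (θ + π / 2) + supportFun X (θ - π / 2))) with hW
  have hWc : Continuous W := by fun_prop
  have hWle : ∀ θ, W θ ≤ (volume X).toReal := by
    intro θ
    have := (le_volume_exitSet hX hconv hr hball hτ0 hτ1 θ).trans
      (measure_mono (fun x hx => hx.1) : _ ≤ volume X)
    exact (ENNReal.ofReal_le_iff_le_toReal hX.measure_ne_top).1 this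
  have hle : ∫⁻ θ in Ico 0 (2 * π), (volume X - volume (exitSet X (2 * τ * r) θ)) ≤
      ENNReal.ofReal (∫ θ in Ico 0 (2 * π), ((volume X).toReal - W θ)) := by
    rw [ofReal_integral_eq_lintegral_ofReal]
    · refine lintegral_mono fun θ => ?_
      rw [tsub_le_iff_right]
      refine le_trans ?_ (add_le_add_right (le_volume_exitSet hX hconv hr hball hτ0 hτ1 θ) _)
      rw [← ENNReal.ofReal_add (by linarith [hWle θ]) ?_]
      · simp [hW, ENNReal.ofReal_toReal hX.measure_ne_top]
      · have := fun θ => hr.le.trans (le_supportFun_of_closedBall_subset hX hr.le hball θ)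
        exact mul_nonneg (by positivity)
          (mul_nonneg (by linarith) (add_nonneg (this _) (this _)))
    · exact ((continuous_const.sub hWc).integrableOn_Icc).mono_set Ico_subset_Icc_self
    · exact Filter.Eventually.of_forall fun θ => sub_nonneg.2 (hWle θ)
  have hint : ∫ θ in Ico 0 (2 * π), ((volume X).toReal - W θ) =
      2 * π * (volume X).toReal -
        2 * τ * r * (1 - τ) * (2 * ∫ θ in (0)..(2 * π), supportFun X θ) := by
    have h1 : Continuous fun θ => supportFun X (θ + π / 2) := by fun_prop
    have h2 : Continuous fun θ => supportFun X (θ - π / 2) := by fun_prop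
    rw [integral_Ico_eq_integral_Ioc, ← intervalIntegral.integral_of_le (by positivity),
      intervalIntegral.integral_sub (continuous_const.intervalIntegrable _ _)
        (hWc.intervalIntegrable _ _)]
    simp only [hW]
    rw [intervalIntegral.integral_const_mul, intervalIntegral.integral_const_mul,
      intervalIntegral.integral_add (h1.intervalIntegrable _ _) (h2.intervalIntegrable _ _),
      intervalIntegral.integral_const, hshift]
    simp_rw [sub_eq_add_neg _ (π / 2)]
    rw [hshift]
    simp only [smul_eq_mul]; ring
  have hnn : 0 ≤ ∫ θ in Ico 0 (2 * π), ((volume X).toReal - W θ) :=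
    integral_nonneg fun θ => sub_nonneg.2 (hWle θ)
  rw [buffonProb, if_neg hA.ne', integral_volume_needleAngles hX]
  have := ENNReal.toReal_mono ENNReal.ofReal_ne_top hle
  rw [ENNReal.toReal_ofReal hnn, hint] at this
  refine (mul_le_mul_of_nonneg_left this (by positivity)).trans_eq ?_
  field_simp

lemma buffonProb_image_add (X : Set Plane) (c : Plane) (l : ℝ) :
    buffonProb ((fun x => c + x) '' X) l = buffonProb X l := by
  have hv : volume ((fun x => c + x) '' X) = volume X := by
    simp
  have he : MeasurableEmbedding fun x : Plane => c + x := measurableEmbedding_addLeft c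
  have hang : ∀ x, needleAngles ((fun x => c + x) '' X) l (c + x) = needleAngles X l x := by
    intro x; ext θ; simp [needleAngles, add_assoc]
  rw [buffonProb, buffonProb, hv,
    (measurePreserving_add_left volume c).setIntegral_image_emb he]
  simp_rw [hang]

/-- Away from the degenerate case, non-disks of perimeter `2π` around the origin lose. -/
lemma exists_buffonProb_lt_of_closedBall_subset {X : Set Plane} {r : ℝ} (hX : IsCompact X)
    (hconv : Convex ℝ X) (hr : 0 < r) (hball : closedBall 0 r ⊆ X)
    (hper : μH[1] (frontier X) = ENNReal.ofReal (2 * π))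
    (hnd : ¬∃ (c : Plane) (r : ℝ), X = closedBall c r) :
    ∃ ε > 0, ∀ l : ℝ, 0 < l → l < ε →
      buffonProb X l < buffonProb (closedBall (0 : Plane) 1) l := by
  have hpi := Real.pi_pos
  have hiso := four_pi_mul_volume_lt_sq_integral hX hconv hr hball hnd
  have hL := integral_supportFun_le hX hconv hr hball (by positivity) hper.le
  have hA : 0 < volume X := (measure_closedBall_pos volume 0 hr).trans_le (measure_mono hball)
  have hA' : 0 < (volume X).toReal := ENNReal.toReal_pos hA.ne' hX.measure_ne_top
  have hL0 : 0 ≤ ∫ θ in (0)..(2 * π), supportFun X θ :=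
    intervalIntegral.integral_nonneg (by positivity) fun θ _ =>
      hr.le.trans (le_supportFun_of_closedBall_subset hX hr.le hball θ)
  have hup := fun τ => buffonProb_le (τ := τ) hX hconv hr hball
  set L := ∫ θ in (0)..(2 * π), supportFun X θ
  set A := (volume X).toReal
  have hLA : 2 * A < L := by nlinarith
  have hLpos : 0 < L := by linarith
  refine ⟨2 * r * (1 - 2 * A / L), ?_, fun l hl hlε => ?_⟩
  · have : 2 * A / L < 1 := (div_lt_one hLpos).2 hLA
    have : 0 < 1 - 2 * A / L := by linarith
    positivity
  have hlτ : l = 2 * (l / (2 * r)) * r := by field_simp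
  have hτ : l / (2 * r) < 1 - 2 * A / L := by
    rw [div_lt_iff₀ (by positivity)]; linarith
  have h2A : 0 < 2 * A / L := by positivity
  have h1 := hup (l / (2 * r)) (by positivity) (by linarith)
  rw [← hlτ] at h1
  refine (h1.trans_lt ?_).trans_le (le_buffonProb_unitDisk hl)
  have h3 : 2 * A < (1 - l / (2 * r)) * L := by
    rw [← div_lt_iff₀ hLpos]; linarith
  have h4 : 2 * l / π = l * (2 * A) / (π * A) := by field_simp
  rw [h4]
  have : l * (2 * A) / (π * A) < l * (1 - l / (2 * r)) * L / (π * A) := by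
    rw [mul_assoc l (1 - _)]
    gcongr
  linarith

/-- Main theorem: among compact convex sets of perimeter `2π`, any
non-disk has strictly smaller Buffon probability than the unit disk for all
sufficiently short needles. -/
theorem buffonProb_lt_unitDisk (X : Set Plane) (hXc : IsCompact X) (hXconv : Convex ℝ X)
    (hper : μH[1] (frontier X) = ENNReal.ofReal (2 * π))
    (hnd : ¬∃ (c : Plane) (r : ℝ), X = Metric.closedBall c r) :
    ∃ ε > 0, ∀ l : ℝ, 0 < l → l < ε →
      buffonProb X l < buffonProb (Metric.closedBall (0 : Plane) 1) l := by
  by_cases hv : volume X = 0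
  · refine ⟨1, one_pos, fun l hl hl1 => ?_⟩
    refine lt_of_lt_of_le ?_ (le_buffonProb_unitDisk hl)
    rw [buffonProb, if_pos hv, sub_pos, div_lt_one Real.pi_pos]
    linarith [Real.pi_gt_three]
  have hint : (interior X).Nonempty := by
    by_contra h
    rw [not_nonempty_iff_eq_empty] at h
    have h0 := hXconv.addHaar_frontier volume
    rw [frontier, h, sdiff_empty, hXc.isClosed.closure_eq] at h0
    exact hv h0
  obtain ⟨c, hc⟩ := hint
  obtain ⟨r, hr, hball⟩ := Metric.nhds_basis_closedBall.mem_iff.1 (mem_interior_iff_mem_nhds.1 hc)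
  set Y := (fun x => -c + x) '' X with hY
  have hYball : closedBall 0 r ⊆ Y := by
    intro y hy
    refine ⟨c + y, hball ?_, by simp⟩
    simpa [mem_closedBall_iff_norm] using hy
  have hYper : μH[1] (frontier Y) = ENNReal.ofReal (2 * π) := by
    have h1 := (IsometryEquiv.addLeft (-c : Plane)).hausdorffMeasure_image 1 (frontier X)
    rw [← hper, ← h1]
    congr 1
    exact ((IsometryEquiv.addLeft (-c : Plane)).toHomeomorph.image_frontier X).symm
  have hYnd : ¬∃ (c : Plane) (r : ℝ), Y = closedBall c r := by
    rintro ⟨d, s, hd⟩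
    refine hnd ⟨c + d, s, ?_⟩
    have : X = (fun x => c + x) '' Y := by rw [hY, image_image]; simp
    rw [this, hd]
    exact (IsometryEquiv.addLeft c).image_closedBall d s
  have hYc : IsCompact Y := hXc.image (by fun_prop)
  have hYconv : Convex ℝ Y := hXconv.translate (-c)
  obtain ⟨ε, hε, h⟩ :=
    exists_buffonProb_lt_of_closedBall_subset hYc hYconv hr hYball hYper hYnd
  refine ⟨ε, hε, fun l hl hlε => ?_⟩
  rw [← buffonProb_image_add X (-c)]
  exact h l hl hlε
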